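/- Let G be a group of orientation-preserving PL homeomorphisms of [0,1], X ⊂ (0,1) a dense G-invariant set. Suppose H ≤ G is classful, H acts transitively on X, and the breaks of every g ∈ G lie in X, and G satisfies: for any t ∈ X and any g ∈ G fixing t there is g̃ ∈ G equal to the identity on [0,t] and equal to g on [t,1]. Then for every interval I = [t,1] with t ∈ X, the group H(I) = {h|_I : h ∈ H, Supp(h) ⊂ I} is classful in G(I) = {g|_I : g ∈ G, Supp(g) ⊂ I}. -/

import Mathlib

open Set

/-- An orientation-preserving piecewise linear homeomorphism of `[0,1]`,
viewed as a map of `ℝ` extended by the identity outside `[0,1]`. -/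
def IsPLHomeo (f : ℝ → ℝ) : Prop :=
  Function.Bijective f ∧ StrictMono f ∧ f 0 = 0 ∧ f 1 = 1 ∧
  (∀ x, x ∉ Icc (0 : ℝ) 1 → f x = x) ∧
  ∃ n : ℕ, ∃ x : Fin (n + 1) → ℝ, StrictMono x ∧ x 0 = 0 ∧ x (Fin.last n) = 1 ∧
    ∀ i : Fin n, ∃ c d : ℝ, ∀ t ∈ Icc (x i.castSucc) (x i.succ), f t = c * t + d

/-- The support of a map: the closure of its set of non-fixed points. -/
def Supp (f : ℝ → ℝ) : Set ℝ := closure {x | f x ≠ x}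

/-!
Let `f ∈ G` be supported in `I = [t,1]`, and let `x ∈ G` conjugate `f` into `H`. By transitivity
some `h ∈ H` sends `x t` back to `t`, so `k = h x` fixes `t` and still conjugates `f` into `H`.
Let `g ∈ G` agree with `k` on `I` and be the identity elsewhere. Since `g⁻¹ k` is the identity on
`I`, it commutes with `f`, whence `g f g⁻¹ = k f k⁻¹ ∈ H`.
-/

open Equiv (Perm)

section Classful

variable {Γ : Type*} [Group Γ] {G H : Subgroup Γ}

/-- `H` is classful in `G`: every element of `G` is conjugate in `G` to an element of `H`.
The inclusion `H ≤ G` is not part of the definition. -/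
def IsClassful (H G : Subgroup Γ) : Prop :=
  ∀ f ∈ G, ∃ x ∈ G, x * f * x⁻¹ ∈ H

theorem IsClassful.exists_mem_stabilizer_conj_mem {α : Type*} [MulAction Γ α] {t : α}
    (hclassful : IsClassful H G) (hHG : H ≤ G) (horbit : ∀ x ∈ G, ∃ h ∈ H, h • x • t = t) :
    ∀ f ∈ G, ∃ k ∈ G ⊓ MulAction.stabilizer Γ t, k * f * k⁻¹ ∈ H := by
  intro f hf
  obtain ⟨x, hxG, hxf⟩ := hclassful f hf
  obtain ⟨h, hhH, hxt⟩ := horbit x hxG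
  have hconj : h * x * f * (h * x)⁻¹ = h * (x * f * x⁻¹) * h⁻¹ := by group
  have hfix : h * x ∈ MulAction.stabilizer Γ t := by
    rwa [MulAction.mem_stabilizer_iff, mul_smul]
  refine ⟨h * x, ⟨G.mul_mem (hHG hhH) hxG, hfix⟩, ?_⟩
  rw [hconj]
  exact H.mul_mem (H.mul_mem hhH hxf) (H.inv_mem hhH)

end Classful

section FixingSubgroup

variable {α : Type*} {S : Set α}

theorem conj_eq_conj_of_eqOn {f g k : Perm α} (hf : f ∈ fixingSubgroup (Perm α) Sᶜ)
    (hgk : EqOn g k S) : g * f * g⁻¹ = k * f * k⁻¹ := by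
  have hdisjoint : Perm.Disjoint (g⁻¹ * k) f := fun x => by
    by_cases hx : x ∈ S
    · exact .inl (Perm.inv_eq_iff_eq.2 (hgk hx).symm)
    · exact .inr ((mem_fixingSubgroup_iff _).1 hf x hx)
  calc g * f * g⁻¹ = g * (f * (g⁻¹ * k)) * k⁻¹ := by group
    _ = g * (g⁻¹ * k * f) * k⁻¹ := by rw [hdisjoint.commute.eq]
    _ = k * f * k⁻¹ := by group

theorem IsClassful.inf_fixingSubgroup_compl {G H : Subgroup (Perm α)} {t : α}
    (hclassful : IsClassful H G) (hHG : H ≤ G) (horbit : ∀ x ∈ G, ∃ h ∈ H, h (x t) = t)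
    (hfrag : ∀ k ∈ G, k t = t → ∃ g ∈ G ⊓ fixingSubgroup (Perm α) Sᶜ, EqOn g k S) :
    IsClassful (H ⊓ fixingSubgroup (Perm α) Sᶜ) (G ⊓ fixingSubgroup (Perm α) Sᶜ) := by
  rintro f ⟨hfG, hfS⟩
  obtain ⟨k, ⟨hkG, hkt⟩, hkf⟩ := hclassful.exists_mem_stabilizer_conj_mem hHG horbit f hfG
  obtain ⟨g, ⟨hgG, hgS⟩, hgk⟩ := hfrag k hkG hkt
  have hgfS : g * f * g⁻¹ ∈ fixingSubgroup (Perm α) Sᶜ := mul_mem (mul_mem hgS hfS) (inv_mem hgS)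
  have hgfH : g * f * g⁻¹ ∈ H := by rwa [conj_eq_conj_of_eqOn hfS hgk]
  exact ⟨g, ⟨hgG, hgS⟩, hgfH, hgfS⟩

end FixingSubgroup

theorem supp_subset_iff_mem_fixingSubgroup {K : Set ℝ} (hK : IsClosed K) {g : Perm ℝ} :
    Supp g ⊆ K ↔ g ∈ fixingSubgroup (Perm ℝ) Kᶜ := by
  rw [Supp, hK.closure_subset_iff, mem_fixingSubgroup_iff]
  exact forall_congr' fun _ => not_imp_comm

theorem classful_restriction_to_right_intervals_general
    (X : Set ℝ) (G H : Subgroup (Perm ℝ))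
    (hG : ∀ g ∈ G, ∀ x, 1 < x → g x = x)
    (hHG : H ≤ G)
    (hXinv : ∀ g ∈ G, ∀ x ∈ X, g x ∈ X)
    (hclassful : IsClassful H G)
    (htrans : ∀ x ∈ X, ∀ y ∈ X, ∃ h ∈ H, h x = y)
    (hfrag : ∀ t ∈ X, ∀ g ∈ G, g t = t →
      ∃ g' ∈ G, (∀ s : ℝ, s ≤ t → g' s = s) ∧ (∀ s : ℝ, t ≤ s → g' s = g s)) :
    ∀ t ∈ X, ∀ f ∈ G, Supp f ⊆ Icc t 1 →
      ∃ g ∈ G, Supp g ⊆ Icc t 1 ∧ Supp ⇑(g * f * g⁻¹) ⊆ Icc t 1 ∧ g * f * g⁻¹ ∈ H := by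
  intro t ht f hfG hf
  have hfragIcc : ∀ k ∈ G, k t = t →
      ∃ g ∈ G ⊓ fixingSubgroup (Perm ℝ) (Icc t 1)ᶜ, EqOn g k (Icc t 1) := by
    intro k hkG hkt
    obtain ⟨g, hgG, hg_left, hg_right⟩ := hfrag t ht k hkG hkt
    refine ⟨g, ⟨hgG, (mem_fixingSubgroup_iff _).2 fun x hx => ?_⟩, fun x hx => hg_right x hx.1⟩
    rcases le_or_gt x t with hxt | htx
    · exact hg_left x hxt
    · exact hG g hgG x (not_le.1 fun hx1 => hx ⟨htx.le, hx1⟩)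
  simp only [supp_subset_iff_mem_fixingSubgroup isClosed_Icc] at hf ⊢
  obtain ⟨g, ⟨hgG, hg⟩, hgfH, hgf⟩ := hclassful.inf_fixingSubgroup_compl hHG
    (fun x hx => htrans (x t) (hXinv x hx t ht) t ht) hfragIcc f ⟨hfG, hf⟩
  exact ⟨g, hgG, hg, hgf, hgfH⟩

/-- Lemma on classfulness of `H(I)` in `G(I)` for intervals `I = [t,1]`:
under conditions A(1), A(3) and B, if `H ≤ G` is classful then for every `t ∈ X` and
every `f ∈ G` supported in `[t,1]`, some conjugate of `f` by an element of `G`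
supported in `[t,1]` lies in `H`. -/
theorem classful_restriction_to_right_intervals
    (X : Set ℝ) (hX : X ⊆ Ioo 0 1)
    (hXdense : ∀ u v : ℝ, 0 ≤ u → u < v → v ≤ 1 → ∃ x ∈ X, u < x ∧ x < v)
    (G H : Subgroup (Equiv.Perm ℝ))
    (hGPL : ∀ g ∈ G, IsPLHomeo g)
    (hHG : H ≤ G)
    (hXinv : ∀ g ∈ G, ∀ x ∈ X, g x ∈ X)
    (hbreaks : ∀ g ∈ G, ∀ t ∈ Ioo (0:ℝ) 1, t ∉ X →
      ∃ ε > (0:ℝ), ∃ c d : ℝ, ∀ s ∈ Icc (t - ε) (t + ε), g s = c * s + d)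
    (hclassful : ∀ g ∈ G, ∃ x ∈ G, x * g * x⁻¹ ∈ H)
    (htrans : ∀ x ∈ X, ∀ y ∈ X, ∃ h ∈ H, h x = y)
    (hfrag : ∀ t ∈ X, ∀ g ∈ G, g t = t →
      ∃ g' ∈ G, (∀ s : ℝ, s ≤ t → g' s = s) ∧ (∀ s : ℝ, t ≤ s → g' s = g s)) :
    ∀ t ∈ X, ∀ f ∈ G, Supp ⇑f ⊆ Icc t 1 →
      ∃ g ∈ G, Supp ⇑g ⊆ Icc t 1 ∧ Supp ⇑(g * f * g⁻¹) ⊆ Icc t 1 ∧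
        g * f * g⁻¹ ∈ H :=
  classful_restriction_to_right_intervals_general X G H
    (fun g hg x hx => (hGPL g hg).2.2.2.2.1 x fun h => hx.not_ge h.2) hHG hXinv
    hclassful htrans hfrag
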